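/- Let q : [0,∞) → [1,∞) be a function with q(r) → ∞ as r → ∞ and let d > 0. Let (k_l)_{l∈ℕ} be an increasing sequence of positive integers such that, for some c > 1 and δ > 0, q(r) ≥ l^c for all r ∈ [(1−δ)k_l, (1+δ)k_l] and all l ∈ ℕ. Then, with K := [−id, id], there exists a function f ∈ Exp(K) such that sup_{x∈ℝ} |f(x)|/q(|x|) < ∞ and f is frequently universal for the sequence (T₁^{k_l})_{l∈ℕ} on Exp(K), i.e., for every g ∈ Exp(K), every n ∈ ℕ and every ε > 0 the set {l ∈ ℕ : ‖f(·+k_l) − g‖_{K,n} < ε} has positive lower density. -/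

import Mathlib

open Filter Complex

/-- Support function `H_K(z) = sup { Re (z·u) : u ∈ K }` of a set `K ⊆ ℂ`. -/
noncomputable def suppFn (K : Set ℂ) (z : ℂ) : ℝ :=
  sSup ((fun u => (z * u).re) '' K)

/-- The norm `‖f‖_{K,n} = sup_z |f z| · exp (−H_K z − |z|/n)`. -/
noncomputable def expNorm (K : Set ℂ) (n : ℕ) (f : ℂ → ℂ) : ℝ :=
  sSup (Set.range fun z : ℂ => ‖f z‖ * Real.exp (-(suppFn K z) - ‖z‖ / n))

/-- Membership in `Exp(K)`: `f` is entire and all the norms `‖f‖_{K,n}` are finite. -/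
def MemExp (K : Set ℂ) (f : ℂ → ℂ) : Prop :=
  Differentiable ℂ f ∧ ∀ n : ℕ, 0 < n →
    BddAbove (Set.range fun z : ℂ => ‖f z‖ * Real.exp (-(suppFn K z) - ‖z‖ / n))

open scoped Classical in
/-- Lower density of a set of natural numbers. -/
noncomputable def lowerDensity (A : Set ℕ) : ℝ :=
  liminf (fun N : ℕ =>
    (((Finset.range (N + 1)).filter (fun n => n ∈ A)).card : ℝ) / N) atTop

/-- Lower density of a discrete subset of `ℂ`. -/
noncomputable def ldensC (Λ : Set ℂ) : ℝ :=
  liminf (fun r : ℝ => (Nat.card {z : ℂ // z ∈ Λ ∧ ‖z‖ ≤ r} : ℝ) / r) atTop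

/-- `f` is hypercyclic for the translation `T₁` on `Exp(K)`. -/
def HCExp (K : Set ℂ) (f : ℂ → ℂ) : Prop :=
  MemExp K f ∧ ∀ g : ℂ → ℂ, MemExp K g → ∀ n : ℕ, 0 < n → ∀ ε > (0 : ℝ),
    ∃ k : ℕ, expNorm K n (fun z => f (z + (k : ℂ)) - g z) < ε

/-- `f` is frequently hypercyclic for the translation `T₁` on `Exp(K)`. -/
def FHCExp (K : Set ℂ) (f : ℂ → ℂ) : Prop :=
  MemExp K f ∧ ∀ g : ℂ → ℂ, MemExp K g → ∀ n : ℕ, 0 < n → ∀ ε > (0 : ℝ),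
    0 < lowerDensity {k : ℕ | expNorm K n (fun z => f (z + (k : ℂ)) - g z) < ε}

/-- `f` is hypercyclic (Birkhoff-universal) for `T₁` on `H(ℂ)`. -/
def HCEnt (f : ℂ → ℂ) : Prop :=
  Differentiable ℂ f ∧ ∀ g : ℂ → ℂ, Differentiable ℂ g → ∀ R > (0 : ℝ), ∀ ε > (0 : ℝ),
    ∃ k : ℕ, ∀ z : ℂ, ‖z‖ ≤ R → ‖f (z + (k : ℂ)) - g z‖ < ε

/-- `f` is frequently hypercyclic (frequently Birkhoff-universal) for `T₁` on `H(ℂ)`. -/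
def FHCEnt (f : ℂ → ℂ) : Prop :=
  Differentiable ℂ f ∧ ∀ g : ℂ → ℂ, Differentiable ℂ g → ∀ R > (0 : ℝ), ∀ ε > (0 : ℝ),
    0 < lowerDensity {k : ℕ | ∀ z : ℂ, ‖z‖ ≤ R → ‖f (z + (k : ℂ)) - g z‖ < ε}

/-- `f` is an entire function of (finite) exponential type. -/
def ExpType (f : ℂ → ℂ) : Prop :=
  Differentiable ℂ f ∧ ∃ C τ : ℝ, ∀ z : ℂ, ‖f z‖ ≤ C * Real.exp (τ * ‖z‖)

/-- The indicator function `h_f(θ) = limsup_{r→∞} log |f(r e^{iθ})| / r`. -/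
noncomputable def indicatorFn (f : ℂ → ℂ) (θ : ℝ) : ℝ :=
  limsup (fun r : ℝ => Real.log ‖f ((r : ℂ) * Complex.exp (θ * Complex.I))‖ / r) atTop

namespace FU

/-- The weight `exp (d |Im z| + |z| / n)`. -/
noncomputable def wt (d : ℝ) (n : ℕ) (z : ℂ) : ℝ := Real.exp (d * |z.im| + ‖z‖ / n)

lemma wt_pos (d : ℝ) (n : ℕ) (z : ℂ) : 0 < wt d n z := Real.exp_pos _

/-- Membership in `Exp(K)` in terms of the weights. -/
def ExpD (d : ℝ) (g : ℂ → ℂ) : Prop :=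
  Differentiable ℂ g ∧ ∀ n : ℕ, 0 < n → ∃ C : ℝ, ∀ z, ‖g z‖ ≤ C * wt d n z

lemma suppFn_seg (d : ℝ) (hd : 0 < d) (z : ℂ) :
    suppFn (segment ℝ (-(d : ℂ) * Complex.I) ((d : ℂ) * Complex.I)) z = d * |z.im| := by
  have hub : ∀ b ∈ ((fun u => (z * u).re) ''
      (segment ℝ (-(d : ℂ) * Complex.I) ((d : ℂ) * Complex.I))), b ≤ d * |z.im| := by
    rintro b ⟨u, ⟨s, t, hs, ht, hst, rfl⟩, rfl⟩
    simp only [mul_re, Complex.add_re, Complex.add_im, real_smul, neg_mul, neg_re, neg_im,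
      ofReal_re, ofReal_im, mul_im, I_re, I_im]
    have h1 := le_abs_self z.im
    have h2 := neg_abs_le z.im
    have e1 : s * d * z.im ≤ s * d * |z.im| := mul_le_mul_of_nonneg_left h1 (by positivity)
    have e2 : t * d * (-|z.im|) ≤ t * d * z.im := mul_le_mul_of_nonneg_left h2 (by positivity)
    have e3 : d * |z.im| = s * d * |z.im| + t * d * |z.im| := by
      rw [← add_mul, ← add_mul, hst, one_mul]
    rw [e3]; ring_nf; ring_nf at e1 e2; linarith
  apply le_antisymm
  · apply csSup_le _ hub
    exact ⟨_, ⟨_, left_mem_segment _ _ _, rfl⟩⟩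
  · rcases le_total 0 z.im with h | h
    · apply le_csSup ⟨_, hub⟩
      refine ⟨_, left_mem_segment _ _ _, ?_⟩
      simp [abs_of_nonneg h]; ring
    · apply le_csSup ⟨_, hub⟩
      refine ⟨_, right_mem_segment _ _ _, ?_⟩
      simp [abs_of_nonpos h]; ring

lemma wt_inv (d : ℝ) (hd : 0 < d) (n : ℕ) (z : ℂ) :
    Real.exp (-(suppFn (segment ℝ (-(d : ℂ) * Complex.I) ((d : ℂ) * Complex.I)) z) - ‖z‖ / n)
      = (wt d n z)⁻¹ := by
  rw [suppFn_seg d hd, wt, ← Real.exp_neg]; congr 1; ring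

lemma memExp_iff (d : ℝ) (hd : 0 < d) (g : ℂ → ℂ) :
    MemExp (segment ℝ (-(d : ℂ) * Complex.I) ((d : ℂ) * Complex.I)) g ↔ ExpD d g := by
  unfold MemExp ExpD
  refine and_congr_right fun _ => forall_congr' fun n => imp_congr_right fun _ => ?_
  simp only [BddAbove, Set.Nonempty, mem_upperBounds, Set.forall_mem_range, wt_inv d hd]
  refine exists_congr fun C => forall_congr' fun z => ?_
  rw [← div_eq_mul_inv, div_le_iff₀ (wt_pos _ _ _)]

lemma expNorm_le (d : ℝ) (hd : 0 < d) (n : ℕ) (g : ℂ → ℂ) (C : ℝ)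
    (h : ∀ z, ‖g z‖ ≤ C * wt d n z) :
    expNorm (segment ℝ (-(d : ℂ) * Complex.I) ((d : ℂ) * Complex.I)) n g ≤ C := by
  unfold expNorm
  apply csSup_le (Set.range_nonempty _)
  rintro _ ⟨z, rfl⟩
  simp only [wt_inv d hd]
  rw [← div_eq_mul_inv, div_le_iff₀ (wt_pos _ _ _)]
  exact h z

/-- Polynomials with coefficients in `ℚ(i)`. -/
noncomputable def pev (P : ℕ →₀ ℚ × ℚ) (z : ℂ) : ℂ :=
  P.sum fun m a => ((a.1 : ℂ) + a.2 * Complex.I) * z ^ m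

lemma pev_add (P Q : ℕ →₀ ℚ × ℚ) (z : ℂ) : pev (P + Q) z = pev P z + pev Q z := by
  unfold pev
  apply Finsupp.sum_add_index' <;> intros <;> simp; ring

lemma pev_single (m : ℕ) (a : ℚ × ℚ) (z : ℂ) :
    pev (Finsupp.single m a) z = ((a.1 : ℂ) + a.2 * Complex.I) * z ^ m := by
  unfold pev; rw [Finsupp.sum_single_index]; simp

lemma pev_diff (P : ℕ →₀ ℚ × ℚ) : Differentiable ℂ (pev P) := by
  unfold pev Finsupp.sum; fun_prop

lemma pev_bound (P : ℕ →₀ ℚ × ℚ) : ∃ C : ℝ, ∃ D : ℕ, 0 ≤ C ∧ ∀ z, ‖pev P z‖ ≤ C * (1 + ‖z‖) ^ D := by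
  induction P using Finsupp.induction_linear with
  | zero => exact ⟨0, 0, le_rfl, by simp [pev]⟩
  | add P Q hP hQ =>
    obtain ⟨C, D, hC, h⟩ := hP
    obtain ⟨C', D', hC', h'⟩ := hQ
    refine ⟨C + C', D + D', by positivity, fun z => ?_⟩
    rw [pev_add]
    have h1 : (1 : ℝ) ≤ 1 + ‖z‖ := by linarith [norm_nonneg z]
    have e1 : (1 + ‖z‖) ^ D ≤ (1 + ‖z‖) ^ (D + D') := pow_le_pow_right₀ h1 (by omega)
    have e2 : (1 + ‖z‖) ^ D' ≤ (1 + ‖z‖) ^ (D + D') := pow_le_pow_right₀ h1 (by omega)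
    calc _ ≤ ‖pev P z‖ + ‖pev Q z‖ := norm_add_le _ _
      _ ≤ C * (1 + ‖z‖) ^ D + C' * (1 + ‖z‖) ^ D' := add_le_add (h z) (h' z)
      _ ≤ C * (1 + ‖z‖) ^ (D + D') + C' * (1 + ‖z‖) ^ (D + D') := by gcongr
      _ = _ := by ring
  | single m a =>
    refine ⟨‖((a.1 : ℂ) + a.2 * Complex.I)‖, m, norm_nonneg _, fun z => ?_⟩
    rw [pev_single, norm_mul, norm_pow]
    gcongr
    linarith

/-- Polynomial growth is dominated by the exponential weight. -/
lemma pow_le_exp (n : ℕ) (hn : 0 < n) (D : ℕ) :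
    ∃ C : ℝ, 0 < C ∧ ∀ x : ℝ, 0 ≤ x → (1 + x) ^ D ≤ C * Real.exp (x / n) := by
  have hn' : (0 : ℝ) < n := by exact_mod_cast hn
  refine ⟨D.factorial * n ^ D * Real.exp (1 / n), by positivity, fun x hx => ?_⟩
  have h := Real.pow_div_factorial_le_exp ((1 + x) / n) (by positivity) D
  rw [div_pow, div_div, div_le_iff₀ (by positivity)] at h
  calc (1 + x) ^ D ≤ _ := h
    _ = _ := by rw [add_div, Real.exp_add]; ring

/-- `g` can be approximated by `ℚ(i)`-polynomials in the norm with index `n`. -/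
def Cl (d : ℝ) (n : ℕ) (g : ℂ → ℂ) : Prop :=
  ∀ ε > (0 : ℝ), ∃ P : ℕ →₀ ℚ × ℚ, ∀ z, ‖g z - pev P z‖ ≤ ε * wt d n z

lemma exists_rat (c : ℂ) (ε : ℝ) (hε : 0 < ε) :
    ∃ a : ℚ × ℚ, ‖c - ((a.1 : ℂ) + a.2 * Complex.I)‖ ≤ ε := by
  obtain ⟨a, ha⟩ := exists_rat_near c.re (half_pos hε)
  obtain ⟨b, hb⟩ := exists_rat_near c.im (half_pos hε)
  refine ⟨(a, b), ?_⟩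
  refine (Complex.norm_le_abs_re_add_abs_im _).trans ?_
  simp only [sub_re, Complex.add_re, mul_re, I_re, I_im, sub_im, Complex.add_im, mul_im,
    Complex.ratCast_re, Complex.ratCast_im]
  simp
  linarith

lemma Cl_add {d : ℝ} {n : ℕ} {g h : ℂ → ℂ} (hg : Cl d n g) (hh : Cl d n h) :
    Cl d n (fun z => g z + h z) := by
  intro ε hε
  obtain ⟨P, hP⟩ := hg (ε / 2) (by positivity)
  obtain ⟨Q, hQ⟩ := hh (ε / 2) (by positivity)
  refine ⟨P + Q, fun z => ?_⟩
  rw [pev_add]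
  calc _ = ‖(g z - pev P z) + (h z - pev Q z)‖ := by congr 1; ring
    _ ≤ _ := norm_add_le _ _
    _ ≤ _ := add_le_add (hP z) (hQ z)
    _ = _ := by ring

lemma Cl_zero (d : ℝ) (n : ℕ) : Cl d n (fun _ => 0) := by
  intro ε hε
  exact ⟨0, fun z => by simpa [pev] using (mul_pos hε (wt_pos d n z)).le⟩

lemma Cl_sum {d : ℝ} {n : ℕ} {g : ℕ → ℂ → ℂ} (hg : ∀ m, Cl d n (g m)) (M : ℕ) :
    Cl d n (fun z => ∑ m ∈ Finset.range M, g m z) := by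
  induction M with
  | zero => simpa using Cl_zero d n
  | succ M ih => simpa only [Finset.sum_range_succ] using Cl_add ih (hg M)

lemma Cl_lim {d : ℝ} {n : ℕ} {g : ℂ → ℂ}
    (h : ∀ ε > (0 : ℝ), ∃ h, Cl d n h ∧ ∀ z, ‖g z - h z‖ ≤ ε * wt d n z) : Cl d n g := by
  intro ε hε
  obtain ⟨f, hf, hgf⟩ := h (ε / 2) (by positivity)
  obtain ⟨P, hP⟩ := hf (ε / 2) (by positivity)
  refine ⟨P, fun z => ?_⟩
  calc _ = ‖(g z - f z) + (f z - pev P z)‖ := by congr 1; ring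
    _ ≤ _ := norm_add_le _ _
    _ ≤ _ := add_le_add (hgf z) (hP z)
    _ = _ := by ring

lemma exp_le_wt (d : ℝ) (hd : 0 < d) (n : ℕ) (z : ℂ) : Real.exp (‖z‖ / n) ≤ wt d n z := by
  unfold wt; apply Real.exp_le_exp.2; have := mul_nonneg hd.le (abs_nonneg z.im); linarith

lemma Cl_mono (d : ℝ) (hd : 0 < d) (n : ℕ) (hn : 0 < n) (c : ℂ) (m : ℕ) :
    Cl d n (fun z => c * z ^ m) := by
  obtain ⟨C, hC, hb⟩ := pow_le_exp n hn m
  intro ε hε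
  obtain ⟨a, ha⟩ := exists_rat c (ε / C) (by positivity)
  refine ⟨Finsupp.single m a, fun z => ?_⟩
  rw [pev_single, ← sub_mul, norm_mul, norm_pow]
  calc _ ≤ ε / C * (C * wt d n z) := by
        gcongr
        calc ‖z‖ ^ m ≤ (1 + ‖z‖) ^ m := by gcongr; linarith
          _ ≤ _ := hb _ (norm_nonneg z)
          _ ≤ _ := by gcongr; exact exp_le_wt d hd n z
    _ = _ := by field_simp

/-- Radius used in the Cauchy estimates. -/
noncomputable def rad (d : ℝ) (n : ℕ) : ℝ := min 1 (1 / (2 * n * d))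

lemma rad_pos (d : ℝ) (hd : 0 < d) (n : ℕ) (hn : 0 < n) : 0 < rad d n := by
  have hn' : (0 : ℝ) < n := by exact_mod_cast hn
  unfold rad; apply lt_min one_pos; positivity

lemma taylor_bound (d : ℝ) (hd : 0 < d) (g : ℂ → ℂ) (hg : ExpD d g) (n : ℕ) (hn : 0 < n) :
    ∃ C : ℝ, 0 ≤ C ∧ ∀ s : ℝ, 0 ≤ s → s ≤ 1 → ∀ m : ℕ, ∀ z : ℂ,
      ‖z ^ m * iteratedDeriv m g (s * z)‖ ≤ m.factorial * (C * ((rad d n)⁻¹) ^ m * wt d n z) := by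
  have hn' : (0 : ℝ) < n := by exact_mod_cast hn
  obtain ⟨C, hC⟩ := hg.2 (4 * n) (by omega)
  have hr := rad_pos d hd n hn
  have hr1 : rad d n ≤ 1 := min_le_left _ _
  have hr2 : d * rad d n ≤ 1 / (2 * n) := by
    calc d * rad d n ≤ d * (1 / (2 * n * d)) := by gcongr; exact min_le_right _ _
      _ = _ := by field_simp
  have hC0 : 0 ≤ C := by
    have := (norm_nonneg _).trans (hC 0)
    exact nonneg_of_mul_nonneg_left this (wt_pos _ _ _)
  refine ⟨C, hC0, fun s hs0 hs1 m z => ?_⟩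
  have key : ∀ w : ℂ, ‖w - s * z‖ ≤ rad d n * ‖z‖ → ‖g w‖ ≤ C * wt d n z := by
    intro w hw
    refine (hC w).trans ?_
    apply mul_le_mul_of_nonneg_left _ hC0
    unfold wt
    apply Real.exp_le_exp.2
    have h1 : |w.im| ≤ |z.im| + rad d n * ‖z‖ := by
      have e : w.im = s * z.im + (w - s * z).im := by simp
      have h3 := (Complex.abs_im_le_norm (w - s * z)).trans hw
      calc |w.im| ≤ |s * z.im| + |(w - s * z).im| := by rw [e]; exact abs_add_le _ _
        _ ≤ |z.im| + rad d n * ‖z‖ := by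
          refine add_le_add ?_ h3
          rw [abs_mul, abs_of_nonneg hs0]
          exact mul_le_of_le_one_left (abs_nonneg _) hs1
    have h2 : ‖w‖ ≤ 2 * ‖z‖ := by
      calc ‖w‖ = ‖s * z + (w - s * z)‖ := by congr 1; ring
        _ ≤ ‖(s : ℂ) * z‖ + ‖w - s * z‖ := norm_add_le _ _
        _ ≤ 1 * ‖z‖ + 1 * ‖z‖ := by
          apply add_le_add
          · rw [norm_mul, Complex.norm_real, Real.norm_of_nonneg hs0]; gcongr
          · exact hw.trans (by gcongr)
        _ = _ := by ring
    calc d * |w.im| + ‖w‖ / ((4 * n : ℕ) : ℝ)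
        ≤ d * (|z.im| + rad d n * ‖z‖) + 2 * ‖z‖ / (4 * n) := by push_cast; gcongr
      _ = d * |z.im| + (d * rad d n) * ‖z‖ + 2 * ‖z‖ / (4 * n) := by ring
      _ ≤ d * |z.im| + (1 / (2 * n)) * ‖z‖ + 2 * ‖z‖ / (4 * n) := by gcongr
      _ = _ := by field_simp; ring
  by_cases hz : z = 0
  · subst hz
    rcases Nat.eq_zero_or_pos m with rfl | hm
    · have := key 0 (by simp)
      simpa using this
    · have : (0 : ℂ) ^ m = 0 := zero_pow (by omega)
      rw [this, zero_mul, norm_zero]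
      have := wt_pos d n 0
      positivity
  · have hz' : 0 < ‖z‖ := norm_pos_iff.2 hz
    have := Complex.norm_iteratedDeriv_le_of_forall_mem_sphere_norm_le (c := s * z)
      (R := rad d n * ‖z‖) (C := C * wt d n z) (f := g) m (by positivity) hg.1.diffContOnCl
      (fun w hw => key w (by rw [mem_sphere_iff_norm] at hw; exact hw.le))
    rw [norm_mul, norm_pow]
    calc _ ≤ ‖z‖ ^ m * (m.factorial * (C * wt d n z) / (rad d n * ‖z‖) ^ m) := by gcongr
      _ = _ := by rw [mul_pow, inv_pow]; field_simp

lemma ExpD_deriv (d : ℝ) (hd : 0 < d) (g : ℂ → ℂ) (hg : ExpD d g) (m : ℕ) (c : ℂ) :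
    ExpD d (fun z => c * (z ^ m * iteratedDeriv m g z)) := by
  refine ⟨?_, fun n hn => ?_⟩
  · have h : Differentiable ℂ (iteratedDeriv m g) := by
      have := hg.1.contDiff (n := ⊤)
      exact this.differentiable_iteratedDeriv m (by exact_mod_cast WithTop.coe_lt_top _)
    fun_prop
  · obtain ⟨C, hC0, hC⟩ := taylor_bound d hd g hg n hn
    refine ⟨‖c‖ * (m.factorial * (C * ((rad d n)⁻¹) ^ m)), fun z => ?_⟩
    have := hC 1 zero_le_one le_rfl m z
    rw [norm_mul]
    simp only [ofReal_one, one_mul] at this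
    calc _ ≤ ‖c‖ * (m.factorial * (C * (rad d n)⁻¹ ^ m * wt d n z)) := by gcongr
      _ = _ := by ring

lemma Cl_step (d : ℝ) (hd : 0 < d) (g : ℂ → ℂ) (hg : ExpD d g) (n : ℕ) (hn : 0 < n)
    (s s' : ℝ) (hs0 : 0 ≤ s) (hs1 : s ≤ 1) (hss : |s' - s| ≤ rad d n / 2)
    (h : ∀ (m : ℕ) (c : ℂ), Cl d n (fun z => c * (z ^ m * iteratedDeriv m g (s * z)))) :
    Cl d n (fun z => g (s' * z)) := by
  obtain ⟨C, hC0, hC⟩ := taylor_bound d hd g hg n hn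
  have hr := rad_pos d hd n hn
  apply Cl_lim
  intro ε hε
  obtain ⟨M, hM⟩ : ∃ M : ℕ, C * (1 / 2 : ℝ) ^ M * 2 ≤ ε := by
    obtain ⟨M, hM⟩ := exists_pow_lt_of_lt_one (show 0 < ε / (2 * (C + 1)) by positivity)
      (show (1 / 2 : ℝ) < 1 by norm_num)
    refine ⟨M, ?_⟩
    rw [lt_div_iff₀ (by positivity)] at hM
    have : (0 : ℝ) < (1 / 2) ^ M := by positivity
    nlinarith
  refine ⟨_, Cl_sum (fun m => h m (((m.factorial : ℂ))⁻¹ * ((s' - s : ℝ) : ℂ) ^ m)) M, fun z => ?_⟩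
  set t : ℕ → ℂ := fun m => ((m.factorial : ℂ))⁻¹ * ((s' - s : ℝ) : ℂ) ^ m *
    (z ^ m * iteratedDeriv m g (s * z)) with ht
  have hsum : HasSum t (g (s' * z)) := by
    have h0 := Complex.hasSum_taylorSeries_of_entire hg.1 (s * z) (s' * z)
    have e : t = fun m => ((m.factorial : ℂ))⁻¹ • (s' * z - s * z) ^ m •
        iteratedDeriv m g (s * z) := by
      funext m
      rw [ht]
      simp only [smul_eq_mul]
      rw [← sub_mul, mul_pow]
      push_cast
      ring
    rw [e]
    exact h0
  have hb : ∀ m, ‖t m‖ ≤ (C * wt d n z) * (1 / 2) ^ m := by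
    intro m
    have hf : (0 : ℝ) < m.factorial := by exact_mod_cast m.factorial_pos
    have hw := wt_pos d n z
    rw [ht]
    simp only
    rw [norm_mul, norm_mul, norm_inv, norm_pow, Complex.norm_natCast, Complex.norm_real,
      Real.norm_eq_abs]
    calc _ ≤ ((m.factorial : ℝ))⁻¹ * (rad d n / 2) ^ m *
          (m.factorial * (C * ((rad d n)⁻¹) ^ m * wt d n z)) := by
          gcongr; exact hC s hs0 hs1 m z
      _ = _ := by rw [div_pow, inv_pow, div_pow, one_pow]; field_simp
  have htail := (hasSum_nat_add_iff' M).2 hsum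
  rw [← htail.tsum_eq]
  have hgs : Summable (fun m : ℕ => (C * wt d n z) * (1 / 2 : ℝ) ^ M * (1 / 2) ^ m) :=
    (summable_geometric_of_lt_one (by norm_num) (by norm_num)).mul_left _
  refine (tsum_of_norm_bounded hgs.hasSum (fun m => ?_)).trans ?_
  · refine (hb _).trans ?_
    rw [pow_add]; apply le_of_eq; ring
  · rw [tsum_mul_left, tsum_geometric_of_lt_one (by norm_num) (by norm_num)]
    have hw := wt_pos d n z
    calc _ = (C * (1 / 2 : ℝ) ^ M * 2) * wt d n z := by norm_num; ring
      _ ≤ _ := by gcongr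

/-- Density of the `ℚ(i)`-polynomials in `Exp(K)`. -/
lemma Cl_all (d : ℝ) (hd : 0 < d) (n : ℕ) (hn : 0 < n) (g : ℂ → ℂ) (hg : ExpD d g) :
    Cl d n g := by
  have hr := rad_pos d hd n hn
  obtain ⟨N, hN⟩ := exists_nat_gt (2 / rad d n)
  have hN0 : (0 : ℝ) < N := lt_trans (by positivity) hN
  have key : ∀ j : ℕ, j ≤ N → ∀ g, ExpD d g → Cl d n (fun z => g (((j / N : ℝ) : ℂ) * z)) := by
    intro j
    induction j with
    | zero =>
      intro _ g hg
      simpa using Cl_mono d hd n hn (g 0) 0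
    | succ j ih =>
      intro hj g hg
      have hj' : (j : ℝ) ≤ N := by exact_mod_cast (Nat.le_of_succ_le hj)
      refine Cl_step d hd g hg n hn (j / N) _ (by positivity) ((div_le_one hN0).2 hj') ?_ ?_
      · have : ((j + 1 : ℕ) / N - j / N : ℝ) = 1 / N := by push_cast; field_simp; ring
        rw [this, abs_of_nonneg (by positivity), div_le_iff₀ hN0]
        rw [div_lt_iff₀ hr] at hN
        linarith
      · intro m c
        rcases Nat.eq_zero_or_pos j with rfl | hjp
        · have := Cl_mono d hd n hn (c * iteratedDeriv m g 0) m
          convert this using 2 with z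
          simp; ring
        · have hjp' : (0 : ℝ) < j := by exact_mod_cast hjp
          have hne : ((j / N : ℝ) : ℂ) ≠ 0 := by
            have : (j / N : ℝ) ≠ 0 := by positivity
            exact_mod_cast this
          have := ih (by omega) _ (ExpD_deriv d hd g hg m (c * (((j / N : ℝ) : ℂ) ^ m)⁻¹))
          convert this using 2 with z
          rw [mul_pow]
          field_simp
  have := key N le_rfl g hg
  rw [div_self hN0.ne'] at this
  simpa using this

/-- The entire function `sin z / z`. -/
noncomputable def sg (z : ℂ) : ℂ := dslope Complex.sin 0 z

lemma sg_diff : Differentiable ℂ sg := by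
  have h := (Complex.differentiableOn_dslope (f := Complex.sin) (s := Set.univ) (c := 0)
    univ_mem).2 Complex.differentiable_sin.differentiableOn
  exact differentiableOn_univ.1 h

lemma sg_zero : sg 0 = 1 := by
  simp [sg, dslope_same]

lemma norm_sin_le (z : ℂ) : ‖Complex.sin z‖ ≤ Real.exp |z.im| := by
  rw [Complex.sin, norm_div, norm_mul, Complex.norm_I, mul_one]
  have h1 : ‖Complex.exp (-z * I)‖ ≤ Real.exp |z.im| := by
    rw [Complex.norm_exp]; apply Real.exp_le_exp.2; simpa using le_abs_self _
  have h2 : ‖Complex.exp (z * I)‖ ≤ Real.exp |z.im| := by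
    rw [Complex.norm_exp]; apply Real.exp_le_exp.2; simpa using neg_le_abs _
  have h3 := norm_sub_le (Complex.exp (-z * I)) (Complex.exp (z * I))
  rw [Complex.norm_ofNat, div_le_iff₀ (by norm_num)]
  linarith

lemma sg_bound : ∃ A : ℝ, 1 ≤ A ∧ ∀ z, ‖sg z‖ ≤ A * Real.exp |z.im| / (1 + ‖z‖) := by
  obtain ⟨B, hB⟩ := (isCompact_closedBall (0 : ℂ) 1).exists_bound_of_continuousOn
    sg_diff.continuous.continuousOn
  have hB1 : 1 ≤ B := by simpa [sg_zero] using hB 0 (by simp)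
  refine ⟨2 * B, by linarith, fun z => ?_⟩
  have hp : 0 < 1 + ‖z‖ := by positivity
  rw [le_div_iff₀ hp]
  have he : 1 ≤ Real.exp |z.im| := Real.one_le_exp (abs_nonneg _)
  rcases le_total ‖z‖ 1 with h | h
  · have := hB z (by simpa using h)
    calc _ ≤ B * 2 := by gcongr; linarith
      _ ≤ 2 * B * Real.exp |z.im| := by nlinarith
  · have hz : z ≠ 0 := by rintro rfl; simp at h; linarith
    have e : sg z = Complex.sin z / z := by
      rw [sg, dslope_of_ne _ hz, slope_def_field]; simp
    have hz' : 0 < ‖z‖ := by positivity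
    rw [e, norm_div]
    calc _ ≤ Real.exp |z.im| / ‖z‖ * (2 * ‖z‖) := by
          gcongr
          · exact norm_sin_le z
          · linarith
      _ = 2 * 1 * Real.exp |z.im| := by field_simp
      _ ≤ _ := by gcongr

/-- Candidates for the countable dense family. -/
noncomputable def Gf (i : (ℕ →₀ ℚ × ℚ) × ℕ × ℕ) (z : ℂ) : ℂ :=
  pev i.1 z * sg (z / ((i.2.2 + 1 : ℝ) : ℂ)) ^ i.2.1

lemma Gf_diff (i : (ℕ →₀ ℚ × ℚ) × ℕ × ℕ) : Differentiable ℂ (Gf i) := by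
  unfold Gf
  have h1 := pev_diff i.1
  have h2 := sg_diff
  apply h1.mul
  apply Differentiable.pow
  exact h2.comp (by fun_prop)

/-- Type at most `d` and decay of order `4` along horizontal lines. -/
def Nice (d : ℝ) (g : ℂ → ℂ) (C : ℝ) : Prop :=
  ∀ z, ‖g z‖ ≤ C * Real.exp (d * |z.im|) / (1 + ‖z‖) ^ 4

lemma Gf_approx (d : ℝ) (hd : 0 < d) (g : ℂ → ℂ) (hg : ExpD d g) (n : ℕ) (hn : 0 < n)
    (ε : ℝ) (hε : 0 < ε) :
    ∃ i, (∃ C, Nice d (Gf i) C) ∧ ∀ z, ‖g z - Gf i z‖ ≤ ε * wt d n z := by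
  obtain ⟨P, hP⟩ := Cl_all d hd n hn g hg (ε / 2) (by positivity)
  obtain ⟨C, D, hC, hb⟩ := pev_bound P
  obtain ⟨A, hA, hsg⟩ := sg_bound
  obtain ⟨C', hC', hb'⟩ := pow_le_exp n hn (D + 1)
  set M := D + 4 with hM
  set R := C * C' * (1 + A ^ M) * 2 / ε with hR
  have hR0 : 0 ≤ R := by positivity
  obtain ⟨η, hη, hcont⟩ : ∃ η > 0, ∀ w : ℂ, ‖w‖ < η →
      ‖1 - sg w ^ M‖ ≤ ε / (2 * (C + 1) * (1 + R) ^ D) := by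
    have hc : ContinuousAt (fun w => sg w ^ M) 0 := (sg_diff.continuous.pow M).continuousAt
    rw [Metric.continuousAt_iff] at hc
    obtain ⟨η, hη, h⟩ := hc (ε / (2 * (C + 1) * (1 + R) ^ D)) (by positivity)
    refine ⟨η, hη, fun w hw => ?_⟩
    have := h (x := w) (by simpa using hw)
    rw [sg_zero, one_pow, dist_comm, dist_eq_norm] at this
    exact this.le
  obtain ⟨N, hN⟩ := exists_nat_gt (max (R / η) (M / d))
  have hN1 : R / η < N + 1 := lt_trans (lt_of_le_of_lt (le_max_left _ _) hN) (by linarith)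
  have hN2 : M / d < N + 1 := lt_trans (lt_of_le_of_lt (le_max_right _ _) hN) (by linarith)
  have hNp : (0 : ℝ) < N + 1 := by positivity
  have hnw : ∀ z : ℂ, ‖z / ((N + 1 : ℝ) : ℂ)‖ = ‖z‖ / (N + 1) := by
    intro z; rw [norm_div, Complex.norm_real, Real.norm_of_nonneg hNp.le]
  have hsM : ∀ z : ℂ, ‖sg (z / ((N + 1 : ℝ) : ℂ)) ^ M‖ ≤
      A ^ M * Real.exp (d * |z.im|) / (1 + ‖z‖ / (N + 1)) ^ M := by
    intro z
    rw [norm_pow]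
    have h1 := hsg (z / ((N + 1 : ℝ) : ℂ))
    rw [hnw, Complex.div_ofReal_im, abs_div, abs_of_pos hNp] at h1
    calc _ ≤ (A * Real.exp (|z.im| / (N + 1)) / (1 + ‖z‖ / (N + 1))) ^ M := by gcongr
      _ = A ^ M * Real.exp (M * (|z.im| / (N + 1))) / (1 + ‖z‖ / (N + 1)) ^ M := by
        rw [div_pow, mul_pow, Real.exp_nat_mul]
      _ ≤ _ := by
        have hh : Real.exp (M * (|z.im| / (N + 1))) ≤ Real.exp (d * |z.im|) := by
          apply Real.exp_le_exp.2
          rw [div_lt_iff₀ hd] at hN2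
          rw [← mul_div_assoc, div_le_iff₀ hNp]
          nlinarith [abs_nonneg z.im]
        gcongr
  refine ⟨(P, M, N), ⟨C * A ^ M * (N + 1) ^ M, fun z => ?_⟩, fun z => ?_⟩
  · unfold Gf
    simp only
    rw [norm_mul]
    have hp : 0 < 1 + ‖z‖ := by positivity
    have h1 : (1 + ‖z‖) / (N + 1) ≤ 1 + ‖z‖ / (N + 1) := by
      rw [add_div]; gcongr; rw [div_le_one hNp]; linarith [Nat.cast_nonneg (α := ℝ) N]
    calc _ ≤ C * (1 + ‖z‖) ^ D * (A ^ M * Real.exp (d * |z.im|) / (1 + ‖z‖ / (N + 1)) ^ M) := by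
          gcongr
          · exact hb z
          · exact hsM z
      _ ≤ C * (1 + ‖z‖) ^ D * (A ^ M * Real.exp (d * |z.im|) / ((1 + ‖z‖) / (N + 1)) ^ M) := by
          gcongr
      _ = _ := by rw [hM, div_pow, pow_add (1 + ‖z‖)]; field_simp
  · have hw := wt_pos d n z
    have hx := norm_nonneg z
    have hsuff : ‖pev P z - Gf (P, M, N) z‖ ≤ ε / 2 * wt d n z := by
      have e : pev P z - Gf (P, M, N) z = pev P z * (1 - sg (z / ((N + 1 : ℝ) : ℂ)) ^ M) := by
        unfold Gf; simp only; ring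
      rw [e, norm_mul]
      rcases le_total ‖z‖ R with h | h
      · have h1 := hcont (z / ((N + 1 : ℝ) : ℂ)) (by
          rw [hnw, div_lt_iff₀ hNp]
          rw [div_lt_iff₀ hη] at hN1
          linarith)
        have hw1 : 1 ≤ wt d n z := by
          refine le_trans (Real.one_le_exp ?_) (exp_le_wt d hd n z)
          positivity
        calc _ ≤ (C + 1) * (1 + R) ^ D * (ε / (2 * (C + 1) * (1 + R) ^ D)) := by
              gcongr
              refine (hb z).trans ?_
              gcongr
              linarith
          _ = ε / 2 * 1 := by field_simp
          _ ≤ _ := by gcongr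
      · have he : 1 ≤ Real.exp (d * |z.im|) := Real.one_le_exp (by positivity)
        have h1 : ‖1 - sg (z / ((N + 1 : ℝ) : ℂ)) ^ M‖ ≤ (1 + A ^ M) * Real.exp (d * |z.im|) := by
          refine (norm_sub_le _ _).trans ?_
          have h2 : ‖sg (z / ((N + 1 : ℝ) : ℂ)) ^ M‖ ≤ A ^ M * Real.exp (d * |z.im|) := by
            refine (hsM z).trans (div_le_self (by positivity) ?_)
            apply one_le_pow₀
            have : 0 ≤ ‖z‖ / (N + 1) := by positivity
            linarith
          rw [norm_one]
          linarith
        have h3 := hb' ‖z‖ hx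
        have hp : 0 < 1 + ‖z‖ := by positivity
        have h4 : C * (1 + ‖z‖) ^ D * (1 + A ^ M) ≤ ε / 2 * Real.exp (‖z‖ / n) := by
          have h5 : C * C' * (1 + A ^ M) ≤ ε / 2 * (1 + ‖z‖) := by
            rw [hR, div_le_iff₀ hε] at h
            nlinarith
          have h6 : (C * (1 + ‖z‖) ^ D * (1 + A ^ M)) * (1 + ‖z‖)
              ≤ (ε / 2 * Real.exp (‖z‖ / n)) * (1 + ‖z‖) := by
            calc _ = C * (1 + A ^ M) * (1 + ‖z‖) ^ (D + 1) := by ring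
              _ ≤ C * (1 + A ^ M) * (C' * Real.exp (‖z‖ / n)) := by gcongr
              _ = C * C' * (1 + A ^ M) * Real.exp (‖z‖ / n) := by ring
              _ ≤ ε / 2 * (1 + ‖z‖) * Real.exp (‖z‖ / n) := by gcongr
              _ = _ := by ring
          exact le_of_mul_le_mul_right h6 hp
        calc _ ≤ C * (1 + ‖z‖) ^ D * ((1 + A ^ M) * Real.exp (d * |z.im|)) := by
              gcongr
              exact hb z
          _ = C * (1 + ‖z‖) ^ D * (1 + A ^ M) * Real.exp (d * |z.im|) := by ring
          _ ≤ ε / 2 * Real.exp (‖z‖ / n) * Real.exp (d * |z.im|) := by gcongr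
          _ = _ := by unfold wt; rw [Real.exp_add]; ring
    calc _ = ‖(g z - pev P z) + (pev P z - Gf (P, M, N) z)‖ := by congr 1; ring
      _ ≤ _ := norm_add_le _ _
      _ ≤ _ := add_le_add (hP z) hsuff
      _ = _ := by ring

lemma family (d : ℝ) (hd : 0 < d) : ∃ (G : ℕ → ℂ → ℂ) (C : ℕ → ℝ),
    (∀ i, Differentiable ℂ (G i)) ∧ (∀ i, Nice d (G i) (C i)) ∧
    ∀ g, ExpD d g → ∀ n : ℕ, 0 < n → ∀ ε > (0 : ℝ), ∃ i, ∀ z, ‖g z - G i z‖ ≤ ε * wt d n z := by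
  have hne : Nonempty {i // ∃ C, Nice d (Gf i) C} :=
    ⟨⟨(0, 0, 0), 0, fun z => by simp [Gf, pev]⟩⟩
  obtain ⟨e, he⟩ := exists_surjective_nat {i // ∃ C, Nice d (Gf i) C}
  refine ⟨fun i => Gf (e i).1, fun i => (e i).2.choose, fun i => Gf_diff _,
    fun i => (e i).2.choose_spec, fun g hg n hn ε hε => ?_⟩
  obtain ⟨j, hj, hz⟩ := Gf_approx d hd g hg n hn ε hε
  obtain ⟨i, hi⟩ := he ⟨j, hj⟩
  exact ⟨i, fun z => by simp only [hi]; exact hz z⟩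

/-- The `2`-adic valuation of `m + 1`. -/
def nu (m : ℕ) : ℕ := padicValNat 2 (m + 1)

/-- Positions at which the building blocks are placed. -/
def pos (m : ℕ) : ℕ := 2 * (∑ i ∈ Finset.range m, (nu i + 1)) + (nu m + 1)

lemma pos_sep {m m' : ℕ} (h : m < m') : pos m + (nu m + 1) + (nu m' + 1) ≤ pos m' := by
  have h1 : ∑ i ∈ Finset.range (m + 1), (nu i + 1) ≤ ∑ i ∈ Finset.range m', (nu i + 1) :=
    Finset.sum_le_sum_of_subset (Finset.range_mono h)
  rw [Finset.sum_range_succ] at h1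
  unfold pos
  omega

lemma pos_strictMono : StrictMono pos := fun m m' h => by
  have := pos_sep h; omega

lemma sum_nu (m : ℕ) : ∑ i ∈ Finset.range m, nu i = padicValNat 2 m.factorial := by
  induction m with
  | zero => simp
  | succ m ih =>
    rw [Finset.sum_range_succ, ih, Nat.factorial_succ,
      padicValNat.mul (by omega) (Nat.factorial_ne_zero m), nu, add_comm]

lemma pos_le (m : ℕ) : pos m ≤ 4 * (m + 1) := by
  have h := sum_nu (m + 1)
  have h2 := sub_one_mul_padicValNat_factorial (p := 2) (m + 1)
  have h3 : ∑ i ∈ Finset.range (m + 1), (nu i + 1) = (∑ i ∈ Finset.range (m + 1), nu i) + (m + 1) := by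
    rw [Finset.sum_add_distrib]; simp
  have h4 := Finset.sum_range_succ (fun i => nu i + 1) m
  unfold pos
  simp only [Nat.add_one_sub_one, one_mul] at h2
  omega

lemma two_pow_nu (m : ℕ) : 2 ^ nu m ≤ m + 1 :=
  Nat.le_of_dvd (by omega) pow_padicValNat_dvd

lemma nu_eq (v t : ℕ) : nu (2 ^ v * (2 * t + 1) - 1) = v := by
  have : 0 < 2 ^ v * (2 * t + 1) := by positivity
  rw [nu, Nat.sub_add_cancel this, padicValNat.mul (by positivity) (by omega),
    padicValNat.prime_pow, padicValNat.eq_zero_of_not_dvd (by omega), add_zero]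

open scoped Classical in
lemma density_pos (A : Set ℕ) (v : ℕ) (h : ∀ m, nu m = v → pos m ∈ A) : 0 < lowerDensity A := by
  set M : ℕ := 8 * 2 ^ v with hM
  have hMp : 0 < M := by positivity
  have hMr : (0 : ℝ) < M := by exact_mod_cast hMp
  have hcount : ∀ N : ℕ, N / M ≤ ((Finset.range (N + 1)).filter (fun n => n ∈ A)).card := by
    intro N
    have hinj : Function.Injective (fun t : ℕ => pos (2 ^ v * (2 * t + 1) - 1)) := by
      intro t t' htt
      have h1 := pos_strictMono.injective htt
      have h2 : 0 < 2 ^ v * (2 * t + 1) := by positivity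
      have h3 : 0 < 2 ^ v * (2 * t' + 1) := by positivity
      have h4 : 2 ^ v * (2 * t + 1) = 2 ^ v * (2 * t' + 1) := by omega
      have h5 := Nat.eq_of_mul_eq_mul_left (by positivity) h4
      omega
    calc N / M = ((Finset.range (N / M)).image (fun t : ℕ => pos (2 ^ v * (2 * t + 1) - 1))).card := by
          rw [Finset.card_image_of_injective _ hinj, Finset.card_range]
      _ ≤ _ := by
        apply Finset.card_le_card
        intro l hl
        rw [Finset.mem_image] at hl
        obtain ⟨t, ht, rfl⟩ := hl
        rw [Finset.mem_range] at ht
        rw [Finset.mem_filter, Finset.mem_range]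
        refine ⟨?_, h _ (nu_eq v t)⟩
        have h1 := pos_le (2 ^ v * (2 * t + 1) - 1)
        have h2 : 0 < 2 ^ v * (2 * t + 1) := by positivity
        rw [Nat.sub_add_cancel h2] at h1
        have h3 : 4 * (2 ^ v * (2 * t + 1)) ≤ M * (t + 1) := by rw [hM]; nlinarith
        have h4 : M * (t + 1) ≤ M * (N / M) := Nat.mul_le_mul_left _ ht
        have h5 := Nat.mul_div_le N M
        omega
  have hev : ∀ᶠ N : ℕ in atTop, 1 / (2 * M : ℝ) ≤
      (((Finset.range (N + 1)).filter (fun n => n ∈ A)).card : ℝ) / N := by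
    filter_upwards [eventually_ge_atTop (2 * M)] with N hN
    have hNr : (2 * M : ℝ) ≤ N := by exact_mod_cast hN
    have hNp : (0 : ℝ) < N := by linarith
    rw [div_le_div_iff₀ (by positivity) hNp]
    have h1 : ((N / M : ℕ) : ℝ) ≤ ((Finset.range (N + 1)).filter (fun n => n ∈ A)).card := by
      exact_mod_cast hcount N
    have h2 : (N : ℝ) < M * ((N / M : ℕ) + 1) := by
      have := Nat.lt_mul_div_succ N hMp
      exact_mod_cast this
    nlinarith
  have hcob : IsCoboundedUnder (· ≥ ·) atTop (fun N : ℕ =>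
      (((Finset.range (N + 1)).filter (fun n => n ∈ A)).card : ℝ) / N) := by
    apply IsBoundedUnder.isCoboundedUnder_ge
    refine ⟨2, ?_⟩
    rw [eventually_map]
    filter_upwards [eventually_ge_atTop 1] with N hN
    have hNr : (1 : ℝ) ≤ N := by exact_mod_cast hN
    rw [div_le_iff₀ (by linarith)]
    have h1 : ((Finset.range (N + 1)).filter (fun n => n ∈ A)).card ≤ N + 1 := by
      simpa using Finset.card_filter_le (Finset.range (N + 1)) (fun n => n ∈ A)
    have h2 : (((Finset.range (N + 1)).filter (fun n => n ∈ A)).card : ℝ) ≤ N + 1 := by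
      exact_mod_cast h1
    linarith
  have := le_liminf_of_le hcob hev
  unfold lowerDensity
  refine lt_of_lt_of_le ?_ this
  positivity

/-- The sum over the integers used as a universal bound. -/
noncomputable def SZ : ℝ := ∑' j : ℤ, 1 / (1 + |(j : ℝ)|) ^ 2

lemma summable_SZ : Summable (fun j : ℤ => 1 / (1 + |(j : ℝ)|) ^ 2) := by
  have h : Summable (fun m : ℕ => 1 / (1 + |(m : ℝ)|) ^ 2) := by
    have := (summable_nat_add_iff 1).2 (Real.summable_one_div_nat_pow.2 (show 1 < 2 by norm_num))
    refine this.congr fun m => ?_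
    rw [abs_of_nonneg (Nat.cast_nonneg m)]; push_cast; ring
  apply Summable.of_nat_of_neg
  · simpa using h
  · simpa using h

lemma SZ_nonneg : 0 ≤ SZ := tsum_nonneg fun j => by positivity

lemma inj_sum (e : ℕ → ℤ) (he : Function.Injective e) (x : ℝ) :
    Summable (fun m => 1 / (1 + |x - e m|) ^ 2) ∧ ∑' m, 1 / (1 + |x - e m|) ^ 2 ≤ 4 * SZ := by
  set F : ℤ → ℝ := fun j => 1 / (1 + |(j : ℝ)|) ^ 2 with hF
  have hinj : Function.Injective (fun m => e m - ⌊x⌋) := fun a b h => he (by simpa using h)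
  have hb : ∀ m, 1 / (1 + |x - e m|) ^ 2 ≤ 4 * F (e m - ⌊x⌋) := by
    intro m
    have h1 := Int.floor_le x
    have h2 := (Int.lt_floor_add_one x).le
    have h3 : 1 + |((e m - ⌊x⌋ : ℤ) : ℝ)| ≤ 2 * (1 + |x - e m|) := by
      push_cast
      have h4 : |(e m : ℝ) - ⌊x⌋| ≤ |x - e m| + 1 := by
        rcases abs_cases ((e m : ℝ) - ⌊x⌋) with h | h <;> rcases abs_cases (x - e m) with h' | h' <;>
          linarith
      linarith [abs_nonneg (x - e m)]
    rw [hF]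
    simp only
    rw [mul_one_div, div_le_div_iff₀ (by positivity) (by positivity)]
    calc _ = (1 + |((e m - ⌊x⌋ : ℤ) : ℝ)|) ^ 2 := by ring
      _ ≤ (2 * (1 + |x - e m|)) ^ 2 := by gcongr
      _ = _ := by ring
  have hs : Summable (fun m => 4 * F (e m - ⌊x⌋)) :=
    (summable_SZ.comp_injective hinj).mul_left 4
  have hs' := Summable.of_nonneg_of_le (fun m => by positivity) hb hs
  refine ⟨hs', (hs'.tsum_le_tsum hb hs).trans ?_⟩
  rw [tsum_mul_left]
  gcongr
  exact tsum_comp_le_tsum_of_inj summable_SZ (fun j => by positivity) hinj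

lemma term_bound (κ b : ℝ) (ν : ℕ) (Q : ℝ → ℝ) (hQ1 : ∀ t, 0 ≤ t → 1 ≤ Q t)
    (hκ : (2 : ℝ) ^ ν ≤ κ + 1) (hb1 : b ≤ ν + 1)
    (hb2 : ∀ t : ℝ, (ν : ℝ) ≤ t → b ≤ Q t) (x : ℝ) :
    b / (1 + |x - κ|) ^ 4 ≤ 2 * Q |x| * (1 / (1 + |x - κ|) ^ 2) := by
  have hq := hQ1 |x| (abs_nonneg x)
  set y := |x - κ| with hy
  have hy0 : 0 ≤ y := abs_nonneg _
  have main : b ≤ 2 * Q |x| * (1 + y) ^ 2 := by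
    have h1 : 1 ≤ (1 + y) ^ 2 := one_le_pow₀ (by linarith)
    rcases le_or_gt (ν : ℝ) |x| with h | h
    · have := hb2 _ h
      nlinarith
    · have h2 : κ - |x| ≤ y := by
        rw [hy]
        rcases abs_cases x with h | h <;> rcases abs_cases (x - κ) with h' | h' <;> linarith
      have h3 : (3 * ν + 1 : ℝ) ≤ 2 * 2 ^ ν := by
        have : ∀ v : ℕ, 3 * v + 1 ≤ 2 * 2 ^ v ∧ (1 ≤ v → 3 ≤ 2 * 2 ^ v) := by
          intro v
          induction v with
          | zero => simp
          | succ v ih =>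
            rw [pow_succ]
            rcases Nat.eq_zero_or_pos v with rfl | hv
            · simp
            · have := ih.2 hv
              have := ih.1
              omega
        exact_mod_cast (this ν).1
      have h4 : b ≤ 2 * (1 + y) := by linarith
      have h5 : (1 + y) ≤ (1 + y) ^ 2 := by nlinarith
      nlinarith
  have hp : 0 < 1 + y := by linarith
  rw [mul_one_div, div_le_div_iff₀ (by positivity) (by positivity)]
  calc b * (1 + y) ^ 2 ≤ 2 * Q |x| * (1 + y) ^ 2 * (1 + y) ^ 2 := by gcongr
    _ = _ := by ring

section construction

variable {d : ℝ} {κ : ℕ → ℕ} {h : ℕ → ℂ → ℂ} {b : ℕ → ℝ}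

lemma norm_term (hN : ∀ v, Nice d (h v) (b v)) (hb0 : ∀ v, 0 ≤ b v)
    (hb1 : ∀ v : ℕ, b v ≤ v + 1) (hκ : ∀ m, 2 ^ nu m ≤ κ m + 1)
    (Q : ℝ → ℝ) (hQ1 : ∀ t, 0 ≤ t → 1 ≤ Q t)
    (hb2 : ∀ (v : ℕ) (t : ℝ), (v : ℝ) ≤ t → b v ≤ Q t) (m : ℕ) (z : ℂ) :
    ‖h (nu m) (z - κ m)‖ ≤
      Real.exp (d * |z.im|) * (2 * Q |z.re|) * (1 / (1 + |z.re - ((κ m : ℤ) : ℝ)|) ^ 2) := by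
  have h1 := hN (nu m) (z - κ m)
  have h2 : (z - κ m).im = z.im := by simp
  have h3 : |z.re - κ m| ≤ ‖z - κ m‖ := by
    have := Complex.abs_re_le_norm (z - κ m)
    simpa using this
  have h4 := term_bound (κ m) (b (nu m)) (nu m) Q hQ1 (by exact_mod_cast hκ m) (hb1 _) (hb2 _) z.re
  have hb := hb0 (nu m)
  rw [h2] at h1
  calc _ ≤ _ := h1
    _ ≤ b (nu m) * Real.exp (d * |z.im|) / (1 + |z.re - κ m|) ^ 4 := by gcongr
    _ = Real.exp (d * |z.im|) * (b (nu m) / (1 + |z.re - κ m|) ^ 4) := by ring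
    _ ≤ Real.exp (d * |z.im|) * (2 * Q |z.re| * (1 / (1 + |z.re - κ m|) ^ 2)) := by gcongr
    _ = _ := by push_cast; ring

lemma kinj (hκm : StrictMono κ) : Function.Injective (fun m => (κ m : ℤ)) :=
  fun a b hab => hκm.injective (by simpa using hab)

lemma norm_f (hκm : StrictMono κ) (hN : ∀ v, Nice d (h v) (b v)) (hb0 : ∀ v, 0 ≤ b v)
    (hb1 : ∀ v : ℕ, b v ≤ v + 1) (hκ : ∀ m, 2 ^ nu m ≤ κ m + 1)
    (Q : ℝ → ℝ) (hQ1 : ∀ t, 0 ≤ t → 1 ≤ Q t)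
    (hb2 : ∀ (v : ℕ) (t : ℝ), (v : ℝ) ≤ t → b v ≤ Q t) (z : ℂ) :
    Summable (fun m => h (nu m) (z - κ m)) ∧
    ‖∑' m, h (nu m) (z - κ m)‖ ≤ 8 * SZ * Q |z.re| * Real.exp (d * |z.im|) := by
  obtain ⟨hs, hle⟩ := inj_sum _ (kinj hκm) z.re
  have hq := hQ1 |z.re| (abs_nonneg _)
  have hsum := hs.mul_left (Real.exp (d * |z.im|) * (2 * Q |z.re|))
  have hbd := norm_term hN hb0 hb1 hκ Q hQ1 hb2 (z := z)
  refine ⟨Summable.of_norm_bounded hsum hbd, ?_⟩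
  refine (tsum_of_norm_bounded hsum.hasSum hbd).trans ?_
  rw [tsum_mul_left]
  calc _ ≤ Real.exp (d * |z.im|) * (2 * Q |z.re|) * (4 * SZ) := by gcongr
    _ = _ := by ring

lemma diff_f (hd : 0 < d) (hκm : StrictMono κ) (hdiff : ∀ v, Differentiable ℂ (h v))
    (hN : ∀ v, Nice d (h v) (b v)) (hb0 : ∀ v, 0 ≤ b v)
    (hb1 : ∀ v : ℕ, b v ≤ v + 1) (hκ : ∀ m, 2 ^ nu m ≤ κ m + 1) :
    Differentiable ℂ (fun z => ∑' m, h (nu m) (z - κ m)) := by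
  have key : ∀ R : ℝ, 0 < R →
      DifferentiableOn ℂ (fun z => ∑' m, h (nu m) (z - κ m)) (Metric.ball 0 R) := by
    intro R hR
    have hs : Summable (fun m : ℕ => Real.exp (d * R) * (2 * (1 + R)) * (1 + R) ^ 2 *
        (1 / ((m + 1 : ℕ) : ℝ) ^ 2)) :=
      ((summable_nat_add_iff 1).2
        (Real.summable_one_div_nat_pow.2 (show 1 < 2 by norm_num))).mul_left _
    refine Complex.differentiableOn_tsum_of_summable_norm hs (fun m => ?_) Metric.isOpen_ball ?_
    · exact ((hdiff _).comp (differentiable_id.sub_const _)).differentiableOn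
    · intro m z hz
      have hzR : ‖z‖ < R := by simpa using hz
      have hre := (Complex.abs_re_le_norm z).trans hzR.le
      have him := (Complex.abs_im_le_norm z).trans hzR.le
      refine (norm_term hN hb0 hb1 hκ (fun t => 1 + t) (fun t ht => by linarith)
        (fun v t ht => (hb1 v).trans (by linarith)) m z).trans ?_
      have hmk : (m : ℝ) ≤ κ m := by exact_mod_cast hκm.le_apply
      have h1 : ((m + 1 : ℕ) : ℝ) ≤ (1 + R) * (1 + |z.re - ((κ m : ℤ) : ℝ)|) := by
        push_cast
        have h2 : (κ m : ℝ) - R ≤ |z.re - κ m| := by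
          rcases abs_cases (z.re - κ m) with h' | h' <;> rcases abs_cases z.re with h | h <;> linarith
        nlinarith [abs_nonneg (z.re - κ m)]
      have h3 : 1 / (1 + |z.re - ((κ m : ℤ) : ℝ)|) ^ 2 ≤ (1 + R) ^ 2 * (1 / ((m + 1 : ℕ) : ℝ) ^ 2) := by
        rw [mul_one_div, div_le_div_iff₀ (by positivity) (by positivity), one_mul, ← mul_pow]
        gcongr
      calc _ ≤ Real.exp (d * R) * (2 * (1 + R)) * ((1 + R) ^ 2 * (1 / ((m + 1 : ℕ) : ℝ) ^ 2)) := by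
            gcongr
        _ = _ := by ring
  intro z
  exact (key (‖z‖ + 1) (by positivity)).differentiableAt
    (Metric.isOpen_ball.mem_nhds (by simp))

lemma approx_f (hκm : StrictMono κ)
    (hsep : ∀ m m', m ≠ m' → ((nu m + 1 : ℝ) + (nu m' + 1)) ≤ |(κ m : ℝ) - κ m'|)
    (hN : ∀ v, Nice d (h v) (b v)) (hb0 : ∀ v, 0 ≤ b v)
    (hb1 : ∀ v : ℕ, b v ≤ v + 1) (hκ : ∀ m, 2 ^ nu m ≤ κ m + 1)
    (n : ℕ) (Cn : ℝ) (hCn : ∀ x : ℝ, 0 ≤ x → (1 + x) ^ 4 ≤ Cn * Real.exp (x / n))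
    (m : ℕ) (z : ℂ) :
    ‖∑' m', h (nu m') (z + κ m - κ m') - h (nu m) z‖ ≤ Cn * (4 * SZ) / (nu m + 1) * wt d n z := by
  have hsumm := (norm_f hκm hN hb0 hb1 hκ (fun t => 1 + t) (fun t ht => by linarith)
        (fun v t ht => (hb1 v).trans (by linarith)) (z + κ m)).1
  have hCn0 : 0 ≤ Cn := by have := hCn 0 le_rfl; simp at this; linarith
  rw [hsumm.tsum_eq_add_tsum_ite m]
  have e : h (nu m) (z + κ m - κ m) = h (nu m) z := by congr 1; ring
  rw [e, add_sub_cancel_left]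
  obtain ⟨hs, hle⟩ := inj_sum _ (kinj hκm) (κ m)
  have hw := wt_pos d n z
  have hsum := hs.mul_left (Cn / (nu m + 1) * wt d n z)
  refine (tsum_of_norm_bounded hsum.hasSum (fun m' => ?_)).trans ?_
  · split_ifs with hm
    · rw [norm_zero]; positivity
    · have h1 := hN (nu m') (z + κ m - κ m')
      have him : (z + κ m - κ m').im = z.im := by simp
      rw [him] at h1
      have hsp := hsep m m' (Ne.symm hm)
      push_cast
      set D := |(κ m : ℝ) - κ m'| with hD
      have hD0 : 0 ≤ D := abs_nonneg _
      have hDn : D ≤ ‖z‖ + ‖z + κ m - κ m'‖ := by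
        have e1 : ((κ m : ℂ) - κ m') = (z + κ m - κ m') - z := by ring
        have e2 : D = ‖(κ m : ℂ) - κ m'‖ := by
          rw [hD, ← Real.norm_eq_abs, ← Complex.norm_real]; push_cast; rfl
        rw [e2, e1]
        refine (norm_sub_le _ _).trans (by linarith)
      set W := ‖z + κ m - κ m'‖ with hW
      have hW0 : 0 ≤ W := norm_nonneg _
      have hz0 := norm_nonneg z
      have hprod : 1 + D ≤ (1 + ‖z‖) * (1 + W) := by nlinarith
      have hpow : (1 + D) ^ 4 ≤ Cn * Real.exp (‖z‖ / n) * (1 + W) ^ 4 := by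
        calc (1 + D) ^ 4 ≤ ((1 + ‖z‖) * (1 + W)) ^ 4 := by gcongr
          _ = (1 + ‖z‖) ^ 4 * (1 + W) ^ 4 := by ring
          _ ≤ _ := by gcongr; exact hCn _ hz0
      have hbD : b (nu m') * (nu m + 1) ≤ (1 + D) ^ 2 := by
        have a1 : b (nu m') ≤ 1 + D := by
          have := hb1 (nu m'); have : (0 : ℝ) ≤ nu m := Nat.cast_nonneg _; linarith
        have a2 : (nu m + 1 : ℝ) ≤ 1 + D := by
          have : (0 : ℝ) ≤ nu m' := Nat.cast_nonneg _; linarith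
        calc _ ≤ (1 + D) * (1 + D) := by gcongr
          _ = _ := by ring
      refine h1.trans ?_
      have hfin : b (nu m') / (1 + W) ^ 4 ≤
          Cn / (nu m + 1) * Real.exp (‖z‖ / n) * (1 / (1 + D) ^ 2) := by
        have e3 : Cn / (nu m + 1) * Real.exp (‖z‖ / n) * (1 / (1 + D) ^ 2) =
            (Cn * Real.exp (‖z‖ / n)) / ((nu m + 1) * (1 + D) ^ 2) := by field_simp
        rw [e3, div_le_div_iff₀ (by positivity) (by positivity)]
        calc _ = b (nu m') * (nu m + 1) * (1 + D) ^ 2 := by ring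
          _ ≤ (1 + D) ^ 2 * (1 + D) ^ 2 := by gcongr
          _ = (1 + D) ^ 4 := by ring
          _ ≤ _ := hpow
      calc _ = Real.exp (d * |z.im|) * (b (nu m') / (1 + W) ^ 4) := by ring
        _ ≤ Real.exp (d * |z.im|) * (Cn / (nu m + 1) * Real.exp (‖z‖ / n) * (1 / (1 + D) ^ 2)) := by
            gcongr
        _ = _ := by unfold wt; rw [Real.exp_add]; ring
  · rw [tsum_mul_left]
    calc _ ≤ (Cn / (nu m + 1) * wt d n z) * (4 * SZ) := by gcongr
      _ = _ := by ring

end construction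

end FU

/-- **Theorem 5.** Given `q → ∞`, `d > 0` and an increasing sequence `(k l)` of positive
integers with `q(r) ≥ l ^ c` on the intervals `[(1−δ)k_l, (1+δ)k_l]` for some `c > 1`,
`δ > 0`, there is `f ∈ Exp([−id, id])` frequently universal for `(T₁^{k_l})` on
`Exp([−id, id])` with `|f(x)| = O(q(|x|))` on the real axis. -/
theorem stmt3 (q : ℝ → ℝ) (hq1 : ∀ r : ℝ, 0 ≤ r → 1 ≤ q r)
    (hq : Tendsto q atTop atTop)
    (d : ℝ) (hd : 0 < d)
    (k : ℕ → ℕ) (hk : StrictMono k) (hkpos : ∀ l : ℕ, 0 < k l)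
    (c δ : ℝ) (hc : 1 < c) (hδ : 0 < δ)
    (hql : ∀ l : ℕ, ∀ r : ℝ,
      (1 - δ) * (k l : ℝ) ≤ r → r ≤ (1 + δ) * (k l : ℝ) → (l : ℝ) ^ c ≤ q r) :
    ∃ f : ℂ → ℂ,
      MemExp (segment ℝ (-(d : ℂ) * Complex.I) ((d : ℂ) * Complex.I)) f ∧
      (∃ C : ℝ, ∀ x : ℝ, ‖f (x : ℂ)‖ ≤ C * q |x|) ∧
      ∀ g : ℂ → ℂ, MemExp (segment ℝ (-(d : ℂ) * Complex.I) ((d : ℂ) * Complex.I)) g →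
        ∀ n : ℕ, 0 < n → ∀ ε > (0 : ℝ),
          0 < lowerDensity {l : ℕ |
            expNorm (segment ℝ (-(d : ℂ) * Complex.I) ((d : ℂ) * Complex.I)) n
              (fun z => f (z + (k l : ℂ)) - g z) < ε} := by
  classical
  obtain ⟨G, C, hGd, hGn, hGa⟩ := FU.family d hd
  have hC0 : ∀ i, 0 ≤ C i := fun i => by
    have := (norm_nonneg _).trans (hGn i 0)
    simpa using this
  set good : ℕ → Prop := fun v => C v.unpair.1 ≤ v + 1 ∧ ∀ t : ℝ, (v : ℝ) ≤ t → C v.unpair.1 ≤ q t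
    with hgood
  set h : ℕ → ℂ → ℂ := fun v => if good v then G v.unpair.1 else fun _ => 0 with hh
  set b : ℕ → ℝ := fun v => if good v then C v.unpair.1 else 0 with hb
  have hb0 : ∀ v, 0 ≤ b v := fun v => by
    simp only [hb]; split_ifs; exacts [hC0 _, le_rfl]
  have hb1 : ∀ v : ℕ, b v ≤ v + 1 := fun v => by
    simp only [hb]; split_ifs with hv; exacts [hv.1, by positivity]
  have hb2 : ∀ (v : ℕ) (t : ℝ), (v : ℝ) ≤ t → b v ≤ q t := fun v t ht => by
    have h0 : 0 ≤ t := le_trans (Nat.cast_nonneg v) ht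
    simp only [hb]; split_ifs with hv; exacts [hv.2 t ht, zero_le_one.trans (hq1 t h0)]
  have hdiff : ∀ v, Differentiable ℂ (h v) := fun v => by
    simp only [hh]; split_ifs; exacts [hGd _, differentiable_const _]
  have hN : ∀ v, FU.Nice d (h v) (b v) := fun v => by
    simp only [hh, hb]; split_ifs; exacts [hGn _, fun z => by simp]
  set κ : ℕ → ℕ := fun m => k (FU.pos m) with hκd
  have hκm : StrictMono κ := hk.comp FU.pos_strictMono
  have hκ : ∀ m, 2 ^ FU.nu m ≤ κ m + 1 := fun m =>
    (FU.two_pow_nu m).trans (by have := hκm.le_apply (x := m); omega)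
  have hsep1 : ∀ m m', m < m' → ((FU.nu m + 1 : ℝ) + (FU.nu m' + 1)) ≤ (κ m' : ℝ) - κ m := by
    intro m m' hm
    have h1 := FU.pos_sep hm
    have h2 := hk.add_le_nat (FU.pos m' - FU.pos m) (FU.pos m)
    have h3 : FU.pos m' - FU.pos m + FU.pos m = FU.pos m' := by omega
    rw [h3] at h2
    have h4 : κ m + (FU.nu m + 1) + (FU.nu m' + 1) ≤ κ m' := by simp only [hκd]; omega
    have h5 : (κ m : ℝ) + (FU.nu m + 1) + (FU.nu m' + 1) ≤ κ m' := by exact_mod_cast h4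
    linarith
  have hsep : ∀ m m', m ≠ m' →
      ((FU.nu m + 1 : ℝ) + (FU.nu m' + 1)) ≤ |(κ m : ℝ) - κ m'| := by
    intro m m' hm
    rcases lt_or_gt_of_ne hm with h1 | h1
    · rw [abs_sub_comm]; exact (hsep1 m m' h1).trans (le_abs_self _)
    · have := hsep1 m' m h1
      refine le_trans ?_ (le_abs_self _)
      linarith
  refine ⟨fun z => ∑' m, h (FU.nu m) (z - κ m), ?_, ⟨8 * FU.SZ, fun x => ?_⟩, ?_⟩
  · rw [FU.memExp_iff d hd]
    refine ⟨FU.diff_f hd hκm hdiff hN hb0 hb1 hκ, fun n hn => ?_⟩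
    obtain ⟨C1, hC1, hx⟩ := FU.pow_le_exp n hn 1
    refine ⟨8 * FU.SZ * C1, fun z => ?_⟩
    refine (FU.norm_f hκm hN hb0 hb1 hκ (fun t => 1 + t) (fun t ht => by linarith)
        (fun v t ht => (hb1 v).trans (by linarith)) z).2.trans ?_
    have hS := FU.SZ_nonneg
    have h1 : 1 + |z.re| ≤ C1 * Real.exp (‖z‖ / n) := by
      have := hx ‖z‖ (norm_nonneg z)
      rw [pow_one] at this
      linarith [Complex.abs_re_le_norm z]
    calc _ ≤ 8 * FU.SZ * (C1 * Real.exp (‖z‖ / n)) * Real.exp (d * |z.im|) := by gcongr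
      _ = _ := by unfold FU.wt; rw [Real.exp_add]; ring
  · have := (FU.norm_f hκm hN hb0 hb1 hκ q hq1 hb2 (x : ℂ)).2
    simpa using this
  · intro g hg n hn ε hε
    rw [FU.memExp_iff d hd] at hg
    obtain ⟨i, hi⟩ := hGa g hg n hn (ε / 4) (by positivity)
    obtain ⟨Cn, hCn, hx⟩ := FU.pow_le_exp n hn 4
    have hS := FU.SZ_nonneg
    obtain ⟨T, hT⟩ := (hq.eventually_ge_atTop (C i)).exists_forall_of_atTop
    obtain ⟨j, hj⟩ := exists_nat_gt (max (max (C i) T) (Cn * (4 * FU.SZ) / (ε / 4)))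
    set v := Nat.pair i j with hv
    have hjv : (j : ℝ) ≤ v := by exact_mod_cast Nat.right_le_pair i j
    have hvi : v.unpair.1 = i := by rw [hv, Nat.unpair_pair]
    have hj1 : C i ≤ j := ((le_max_left _ _).trans (le_max_left _ _)).trans hj.le
    have hj2 : T ≤ j := ((le_max_right _ _).trans (le_max_left _ _)).trans hj.le
    have hj3 : Cn * (4 * FU.SZ) / (ε / 4) ≤ j := (le_max_right _ _).trans hj.le
    have hgv : good v := by
      refine ⟨by rw [hvi]; linarith, fun t ht => ?_⟩
      rw [hvi]; exact hT t (by linarith)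
    have hhv : h v = G i := by simp only [hh, if_pos hgv, hvi]
    apply FU.density_pos _ v
    intro m hm
    rw [Set.mem_ofPred_eq]
    refine lt_of_le_of_lt (FU.expNorm_le d hd n _ (ε / 2) fun z => ?_) (by linarith)
    have h1 := FU.approx_f hκm hsep hN hb0 hb1 hκ n Cn hx m z
    rw [hm, hhv] at h1
    have hw := FU.wt_pos d n z
    have h2 : Cn * (4 * FU.SZ) / (v + 1) ≤ ε / 4 := by
      rw [div_le_iff₀ (by positivity)] at hj3 ⊢
      nlinarith
    have h3 := hi z
    calc _ = ‖(∑' m', h (FU.nu m') (z + κ m - κ m') - G i z) - (g z - G i z)‖ := by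
          congr 1; simp only [hκd]; ring
      _ ≤ _ := norm_sub_le _ _
      _ ≤ ε / 4 * FU.wt d n z + ε / 4 * FU.wt d n z := by
          refine add_le_add (h1.trans ?_) h3
          gcongr
      _ = _ := by ring
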